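/- Let α ∈ (0,1) and β ∈ ℝ. For ν > 0 define θ(u;ν) = arg( D(u;ν) + i·sin((1−α)π/2) ) with D(u;ν) = (u² − (β/ν)²)/(1 + (β/ν)²)·u^{1−α} + cos((1−α)π/2), and set b_α(β,ν) = (1/π)·∫₀^∞ θ(u;ν) du and b_α = sin( (π/(3−α))·((1−α)/2) ) / sin( π/(3−α) ). Then there exist C > 0 and ν₀ > 0 such that |b_α(β,ν) − b_α| ≤ C·(β/ν)² for all ν ≥ ν₀; in particular b_α(β,ν) → b_α as ν → ∞. -/

import Mathlib

open Real Complex Set Filter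

/-- `θ(u;ν) = arg( D(u;ν) + i·sin((1−α)π/2) )` with
`D(u;ν) = (u² − (β/ν)²)/(1 + (β/ν)²)·u^{1−α} + cos((1−α)π/2)`. -/
noncomputable def thetaNu (α β : ℝ) (ν : ℝ) (u : ℝ) : ℝ :=
  Complex.arg ((((u ^ 2 - (β / ν) ^ 2) / (1 + (β / ν) ^ 2) * u ^ (1 - α)
      + Real.cos ((1 - α) * π / 2) : ℝ) : ℂ)
    + (Real.sin ((1 - α) * π / 2) : ℝ) * Complex.I)

/-- `b_α(β,ν) = (1/π)·∫₀^∞ θ(u;ν) du`. -/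
noncomputable def bAlphaNu (α β ν : ℝ) : ℝ :=
  (1 / π) * ∫ u in Set.Ioi (0:ℝ), thetaNu α β ν u

/-- `b_α = sin((π/(3−α))·((1−α)/2)) / sin(π/(3−α))`. -/
noncomputable def bAlpha (α : ℝ) : ℝ :=
  Real.sin ((π / (3 - α)) * ((1 - α) / 2)) / Real.sin (π / (3 - α))

open MeasureTheory

lemma aux_lower {p c u : ℝ} (hp : 2 ≤ p) (hc : 0 < c) (hu : 0 ≤ u) :
    min c 1 / 2 * (1 + u ^ 2) ≤ u ^ p + c := by
  have h1 := min_le_left c 1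
  have h2 := min_le_right c 1
  have h0 : 0 < min c 1 := lt_min hc one_pos
  rcases le_total u 1 with h | h
  · have : 0 ≤ u ^ p := Real.rpow_nonneg hu p
    have h3 : u ^ 2 ≤ 1 := by nlinarith
    nlinarith
  · have : u ^ (2:ℝ) ≤ u ^ p := Real.rpow_le_rpow_of_exponent_le h hp
    rw [Real.rpow_two] at this
    nlinarith

lemma aux_kpos {c : ℝ} (hc : 0 < c) : 0 < min c 1 / 2 := by
  have h0 : 0 < min c 1 := lt_min hc one_pos
  linarith

lemma aux_inv_le {p c u : ℝ} (hp : 2 ≤ p) (hc : 0 < c) (hu : 0 ≤ u) :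
    (u ^ p + c)⁻¹ ≤ (min c 1 / 2)⁻¹ * (1 + u ^ 2)⁻¹ := by
  rw [← mul_inv]
  have := aux_kpos hc
  exact inv_anti₀ (by positivity) (aux_lower hp hc hu)

lemma aux_cont {p : ℝ} (hp : 2 ≤ p) : Continuous (fun u : ℝ => u ^ p) :=
  Real.continuous_rpow_const (by linarith)

lemma aux_cont' {p : ℝ} (hp : 2 ≤ p) : Continuous (fun u : ℝ => ((u ^ p : ℝ) : ℂ)) :=
  Complex.continuous_ofReal.comp (aux_cont hp)

lemma aux_intg : IntegrableOn (fun u : ℝ => (1 + u ^ 2)⁻¹) (Ioi 0) :=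
  integrable_inv_one_add_sq.integrableOn

lemma aux_int_inv {p c : ℝ} (hp : 2 ≤ p) (hc : 0 < c) :
    IntegrableOn (fun u : ℝ => (u ^ p + c)⁻¹) (Ioi 0) := by
  refine Integrable.mono' (aux_intg.const_mul (min c 1 / 2)⁻¹) ?_ ?_
  · exact ((aux_cont hp).measurable.add_const c).inv.aestronglyMeasurable
  · refine (ae_restrict_iff' measurableSet_Ioi).2 (ae_of_all _ fun u hu => ?_)
    have hu : 0 < u := hu
    rw [Real.norm_of_nonneg (by positivity)]
    exact aux_inv_le hp hc hu.le

lemma aux_real {p r : ℝ} (hp : 2 ≤ p) (hr : 0 < r) :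
    ∫ u in Ioi (0:ℝ), (u ^ p + r)⁻¹ = (π / p) / Real.sin (π / p) * r ^ (1 / p - 1) := by
  have hp0 : 0 < p := by linarith
  have hp1 : 1 / p < 1 := by rw [div_lt_one hp0]; linarith
  have e1 : ∀ u ∈ Ioi (0:ℝ), (u ^ p + r)⁻¹ = ∫ x in Ioi (0:ℝ), Real.exp (-(u ^ p + r) * x) := by
    intro u hu
    have hu : 0 < u := hu
    have : 0 < u ^ p + r := by positivity
    rw [integral_exp_mul_Ioi (by linarith)]
    rw [mul_zero, Real.exp_zero, neg_div_neg_eq, one_div]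
  have e2 : ∀ x ∈ Ioi (0:ℝ), ∫ u in Ioi (0:ℝ), Real.exp (-(u ^ p + r) * x)
      = Real.Gamma (1 / p + 1) * (x ^ ((1 - 1 / p) - 1) * Real.exp (-(r * x))) := by
    intro x hx
    have : ∀ u : ℝ, Real.exp (-(u ^ p + r) * x) = Real.exp (-x * u ^ p) * Real.exp (-(r * x)) := by
      intro u; rw [← Real.exp_add]; ring_nf
    simp_rw [this]
    rw [integral_mul_const, integral_exp_neg_mul_rpow hp0 hx,
      show (1 - 1 / p) - 1 = -1 / p by ring]
    ring
  rw [setIntegral_congr_fun measurableSet_Ioi e1, integral_integral_swap,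
    setIntegral_congr_fun measurableSet_Ioi e2, integral_const_mul,
    Real.integral_rpow_mul_exp_neg_mul_Ioi (by linarith) hr, Real.Gamma_add_one (by positivity)]
  · have := Real.Gamma_mul_Gamma_one_sub (1 / p)
    rw [mul_one_div] at this
    rw [one_div r, Real.inv_rpow hr.le, ← Real.rpow_neg hr.le, neg_sub]
    calc _ = 1 / p * (Real.Gamma (1 / p) * Real.Gamma (1 - 1 / p)) * r ^ (1 / p - 1) := by ring
      _ = _ := by rw [this]; ring
  · rw [integrable_prod_iff]
    · constructor
      · refine (ae_restrict_iff' measurableSet_Ioi).2 (ae_of_all _ fun u hu => ?_)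
        have hu : 0 < u := hu
        have : 0 < u ^ p + r := by positivity
        exact integrableOn_exp_mul_Ioi (a := -(u ^ p + r)) (by linarith) 0
      · simp only [Function.uncurry, Real.norm_eq_abs, Real.abs_exp]
        exact (integrableOn_congr_fun e1 measurableSet_Ioi).1 (aux_int_inv hp hr)
    · apply Continuous.aestronglyMeasurable
      have := aux_cont hp
      unfold Function.uncurry
      exact Real.continuous_exp.comp (((this.comp continuous_fst).add_const r).neg.mul continuous_snd)

lemma aux_norm_le {p u : ℝ} {z : ℂ} {c : ℝ} (hp : 2 ≤ p) (hc : 0 < c) (hz : c ≤ z.re) (hu : 0 ≤ u) :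
    ‖(((u ^ p : ℝ) : ℂ) + z)⁻¹‖ ≤ (min c 1 / 2)⁻¹ * (1 + u ^ 2)⁻¹ := by
  refine le_trans ?_ (aux_inv_le hp hc hu)
  rw [norm_inv]
  have : 0 ≤ u ^ p := Real.rpow_nonneg hu p
  refine inv_anti₀ (by positivity) ?_
  refine le_trans ?_ (Complex.re_le_norm _)
  simp; exact hz

lemma aux_meas {p : ℝ} (hp : 2 ≤ p) (z : ℂ) :
    AEStronglyMeasurable (fun u : ℝ => (((u ^ p : ℝ) : ℂ) + z)⁻¹) (volume.restrict (Ioi 0)) :=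
  ((aux_cont' hp).measurable.add_const z).inv.aestronglyMeasurable

lemma aux_int_c {p : ℝ} {z : ℂ} (hp : 2 ≤ p) (hz : 0 < z.re) :
    IntegrableOn (fun u : ℝ => (((u ^ p : ℝ) : ℂ) + z)⁻¹) (Ioi 0) := by
  refine Integrable.mono' (aux_intg.const_mul (min z.re 1 / 2)⁻¹) (aux_meas hp z) ?_
  refine (ae_restrict_iff' measurableSet_Ioi).2 (ae_of_all _ fun u hu => ?_)
  exact aux_norm_le hp hz le_rfl (le_of_lt hu)

lemma aux_diff {p : ℝ} {z : ℂ} (hp : 2 ≤ p) (hz : 0 < z.re) :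
    DifferentiableAt ℂ (fun z : ℂ => ∫ u in Ioi (0:ℝ), (((u ^ p : ℝ) : ℂ) + z)⁻¹) z := by
  have hc : 0 < z.re / 2 := by linarith
  have hb : ∀ w ∈ Metric.ball z (z.re / 2), z.re / 2 ≤ w.re := by
    intro w hw
    rw [mem_ball_iff_norm] at hw
    have := (Complex.abs_re_le_norm (w - z)).trans hw.le
    rw [Complex.sub_re] at this
    linarith [(abs_le.1 this).1]
  have := hasDerivAt_integral_of_dominated_loc_of_deriv_le (𝕜 := ℂ) (μ := volume.restrict (Ioi (0:ℝ)))
    (F := fun (z : ℂ) (u : ℝ) => (((u ^ p : ℝ) : ℂ) + z)⁻¹) (x₀ := z)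
    (F' := fun (z : ℂ) (u : ℝ) => -1 / (((u ^ p : ℝ) : ℂ) + z) ^ 2)
    (bound := fun u => (min (z.re / 2) 1 / 2)⁻¹ ^ 2 * (1 + u ^ 2)⁻¹)
    (s := Metric.ball z (z.re / 2))
    (Metric.ball_mem_nhds z hc) (Eventually.of_forall fun w => aux_meas hp w) (aux_int_c hp hz)
    ?_ ?_ (aux_intg.const_mul _) ?_
  · exact this.2.differentiableAt
  · exact (measurable_const.div (((aux_cont' hp).measurable.add_const z).pow_const 2)).aestronglyMeasurable
  · refine (ae_restrict_iff' measurableSet_Ioi).2 (ae_of_all _ fun u hu w hw => ?_)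
    have h1 := aux_norm_le hp hc (hb w hw) (le_of_lt hu)
    rw [norm_inv] at h1
    rw [norm_div, norm_neg, norm_one, norm_pow, one_div, ← inv_pow]
    calc _ ≤ ((min (z.re / 2) 1 / 2)⁻¹ * (1 + u ^ 2)⁻¹) ^ 2 := by gcongr
      _ = (min (z.re / 2) 1 / 2)⁻¹ ^ 2 * ((1 + u ^ 2)⁻¹ * (1 + u ^ 2)⁻¹) := by ring
      _ ≤ (min (z.re / 2) 1 / 2)⁻¹ ^ 2 * ((1 + u ^ 2)⁻¹ * 1) := by
        gcongr
        exact inv_le_one_of_one_le₀ (by nlinarith [sq_nonneg u])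
      _ = _ := by ring
  · refine (ae_restrict_iff' measurableSet_Ioi).2 (ae_of_all _ fun u hu w hw => ?_)
    have hu : 0 < u := hu
    have h3 : 0 ≤ u ^ p := Real.rpow_nonneg hu.le p
    have h2 := hb w hw
    refine HasDerivAt.inv ((hasDerivAt_id w).const_add _) ?_
    intro h
    have := congrArg Complex.re h
    simp at this
    linarith

lemma aux_complex {p : ℝ} {z : ℂ} (hp : 2 ≤ p) (hz : 0 < z.re) :
    ∫ u in Ioi (0:ℝ), (((u ^ p : ℝ) : ℂ) + z)⁻¹
      = (((π / p) / Real.sin (π / p) : ℝ) : ℂ) * z ^ (((1 / p - 1 : ℝ)) : ℂ) := by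
  have hopen : IsOpen {z : ℂ | 0 < z.re} := isOpen_lt continuous_const Complex.continuous_re
  have hconv : Convex ℝ {z : ℂ | 0 < z.re} := convex_halfSpace_re_gt 0
  have h1 : AnalyticOnNhd ℂ (fun z : ℂ => ∫ u in Ioi (0:ℝ), (((u ^ p : ℝ) : ℂ) + z)⁻¹)
      {z : ℂ | 0 < z.re} :=
    DifferentiableOn.analyticOnNhd (fun w hw => (aux_diff hp hw).differentiableWithinAt) hopen
  have h2 : AnalyticOnNhd ℂ (fun z : ℂ => (((π / p) / Real.sin (π / p) : ℝ) : ℂ)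
      * z ^ (((1 / p - 1 : ℝ)) : ℂ)) {z : ℂ | 0 < z.re} :=
    DifferentiableOn.analyticOnNhd (fun w hw =>
      ((differentiableAt_id.cpow_const (Or.inl hw)).const_mul _).differentiableWithinAt) hopen
  have key := h1.eqOn_of_preconnected_of_frequently_eq h2 hconv.isPreconnected
    (z₀ := 1) (by simp) ?_
  · exact key hz
  have ht : Tendsto (fun n : ℕ => (((1 + 1 / ((n:ℝ) + 1) : ℝ)) : ℂ)) atTop (nhdsWithin 1 {1}ᶜ) := by
    rw [tendsto_nhdsWithin_iff]
    constructor
    · have := (tendsto_one_div_add_atTop_nhds_zero_nat (𝕜 := ℝ)).const_add 1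
      rw [add_zero] at this
      have h := (Complex.continuous_ofReal.tendsto 1).comp this
      rw [Complex.ofReal_one] at h
      exact h
    · refine Eventually.of_forall fun n => ?_
      simp only [mem_compl_iff, mem_singleton_iff]
      intro h
      have := congrArg Complex.re h
      rw [Complex.ofReal_re] at this
      have h3 : 0 < 1 / ((n:ℝ) + 1) := by positivity
      simp only [Complex.one_re] at this
      linarith
  refine ht.frequently (Eventually.frequently (Eventually.of_forall fun n => ?_))
  have hr : 0 < 1 + 1 / ((n:ℝ) + 1) := by positivity
  generalize 1 + 1 / ((n:ℝ) + 1) = r at hr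
  rw [← Complex.ofReal_cpow hr.le, ← Complex.ofReal_mul, ← aux_real hp hr, ← integral_complex_ofReal]
  simp

lemma aux_arg {s : ℝ} (hs : 0 < s) (x : ℝ) :
    Complex.arg ((x : ℂ) + (s : ℂ) * Complex.I) = π / 2 - Real.arctan (x / s) := by
  set t := x / s with ht
  have hx : x = s * t := by rw [ht]; field_simp
  have hq : 0 < √(1 + t ^ 2) := Real.sqrt_pos.2 (by positivity)
  have h1 := Real.sin_arctan t
  have h2 := Real.cos_arctan t
  have hm : π / 2 - Real.arctan t ∈ Ioc (-π) π := by
    have := Real.arctan_lt_pi_div_two t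
    have := Real.neg_pi_div_two_lt_arctan t
    constructor <;> linarith [Real.pi_pos]
  rw [← Complex.arg_mul_cos_add_sin_mul_I (mul_pos hs hq) hm, ← Complex.ofReal_cos,
    ← Complex.ofReal_sin, Real.cos_pi_div_two_sub, Real.sin_pi_div_two_sub, h1, h2, hx]
  congr 1
  have hq' : ((√(1 + t ^ 2) : ℝ) : ℂ) ≠ 0 := by exact_mod_cast hq.ne'
  push_cast
  field_simp

lemma aux_arctan_le {y : ℝ} (hy : 0 ≤ y) : Real.arctan y ≤ y := by
  have := Real.le_tan (Real.arctan_nonneg.2 hy) (Real.arctan_lt_pi_div_two y)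
  rwa [Real.tan_arctan] at this

lemma aux_arctan_sub {C a b : ℝ} (hab : a ≤ b) (hC : ∀ x, a ≤ x → 1 / (1 + x ^ 2) ≤ C) :
    Real.arctan b - Real.arctan a ≤ C * (b - a) := by
  refine (convex_Ici a).image_sub_le_mul_sub_of_deriv_le Real.continuous_arctan.continuousOn
    Real.differentiable_arctan.differentiableOn ?_ a (mem_Ici.2 le_rfl) b (mem_Ici.2 hab) hab
  intro x hx
  rw [interior_Ici] at hx
  rw [Real.deriv_arctan]
  exact hC x (le_of_lt hx)

lemma aux_T_nonneg (x : ℝ) : 0 ≤ π / 2 - Real.arctan x := by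
  linarith [Real.arctan_lt_pi_div_two x]

lemma aux_T_le {x s : ℝ} (hs : 0 < s) (hx : 0 < x) : π / 2 - Real.arctan (x / s) ≤ s * x⁻¹ := by
  rw [← Real.arctan_inv_of_pos (by positivity), inv_div, ← div_eq_mul_inv]
  exact aux_arctan_le (by positivity)

lemma aux_T_int {p c s : ℝ} (hp : 2 ≤ p) (hc : 0 < c) (hs : 0 < s) :
    IntegrableOn (fun u : ℝ => π / 2 - Real.arctan ((u ^ p + c) / s)) (Ioi 0) := by
  refine Integrable.mono' ((aux_int_inv hp hc).const_mul s) ?_ ?_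
  · apply Continuous.aestronglyMeasurable
    exact continuous_const.sub
      (Real.continuous_arctan.comp (((aux_cont hp).add_const c).div_const s))
  · refine (ae_restrict_iff' measurableSet_Ioi).2 (ae_of_all _ fun u hu => ?_)
    have hu : 0 < u := hu
    rw [Real.norm_of_nonneg (aux_T_nonneg _)]
    exact aux_T_le hs (by positivity)

lemma aux_T_integral {p φ : ℝ} (hp : 2 ≤ p) (h0 : 0 < φ) (h1 : φ < π / 2) :
    ∫ u in Ioi (0:ℝ), (π / 2 - Real.arctan ((u ^ p + Real.cos φ) / Real.sin φ))
      = π * (Real.sin (φ / p) / Real.sin (π / p)) := by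
  have hp0 : 0 < p := by linarith
  have hc : 0 < Real.cos φ := Real.cos_pos_of_mem_Ioo ⟨by linarith, h1⟩
  have hs : 0 < Real.sin φ := Real.sin_pos_of_pos_of_lt_pi h0 (by linarith)
  set z : ℂ := Complex.exp (φ * Complex.I) with hz
  have hzre : z.re = Real.cos φ := by rw [hz, Complex.exp_ofReal_mul_I_re]
  have hzim : z.im = Real.sin φ := by rw [hz, Complex.exp_ofReal_mul_I_im]
  have hzp : 0 < z.re := by rw [hzre]; exact hc
  have hI := (aux_int_c hp hzp).const_mul z
  have hcz := aux_complex hp hzp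
  have hlog : Complex.log z = φ * Complex.I := by
    rw [hz, Complex.log_exp] <;> simp <;> linarith [Real.pi_pos]
  have hpw : z * z ^ (((1 / p - 1 : ℝ)) : ℂ) = Complex.exp (((φ / p : ℝ) : ℂ) * Complex.I) := by
    have hz0 : z ≠ 0 := Complex.exp_ne_zero _
    have hpc : (p : ℂ) ≠ 0 := by exact_mod_cast hp0.ne'
    rw [Complex.cpow_def_of_ne_zero hz0, hlog, hz, ← Complex.exp_add]
    congr 1
    push_cast
    ring
  have him : ∫ u in Ioi (0:ℝ), (z * (((u ^ p : ℝ) : ℂ) + z)⁻¹).im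
      = (π / p) / Real.sin (π / p) * Real.sin (φ / p) := by
    have := integral_im hI
    simp only [RCLike.im_to_complex] at this
    rw [this, integral_const_mul, hcz, mul_left_comm, hpw, Complex.im_ofReal_mul,
      Complex.exp_ofReal_mul_I_im]
  have hIim : IntegrableOn (fun u : ℝ => (z * (((u ^ p : ℝ) : ℂ) + z)⁻¹).im) (Ioi 0) := hI.im
  have hT := aux_T_int hp hc hs
  have hmain := integral_Ioi_of_hasDerivAt_of_tendsto (a := 0) (m := 0)
    (f := fun u : ℝ => u * (π / 2 - Real.arctan ((u ^ p + Real.cos φ) / Real.sin φ)))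
    (f' := fun u : ℝ => (π / 2 - Real.arctan ((u ^ p + Real.cos φ) / Real.sin φ))
      - p * (z * (((u ^ p : ℝ) : ℂ) + z)⁻¹).im) ?_ ?_ (hT.sub (hIim.const_mul p)) ?_
  · rw [integral_sub hT (hIim.const_mul p), integral_const_mul, him] at hmain
    have : p * ((π / p) / Real.sin (π / p) * Real.sin (φ / p))
        = π * (Real.sin (φ / p) / Real.sin (π / p)) := by field_simp
    rw [← this]
    simp only [zero_mul, sub_zero] at hmain
    linarith
  · apply Continuous.continuousWithinAt
    exact continuous_id.mul (continuous_const.sub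
      (Real.continuous_arctan.comp (((aux_cont hp).add_const _).div_const _)))
  · intro u hu
    have hu : 0 < u := hu
    have hd : HasDerivAt (fun u : ℝ => (u ^ p + Real.cos φ) / Real.sin φ)
        (p * u ^ (p - 1) / Real.sin φ) u :=
      ((Real.hasDerivAt_rpow_const (Or.inl hu.ne')).add_const _).div_const _
    have h := (hasDerivAt_id u).mul (hd.arctan.const_sub (π / 2))
    refine h.congr_deriv ?_
    simp only [id]
    have hup : u * u ^ (p - 1) = u ^ p := by
      rw [Real.rpow_sub_one hu.ne']; field_simp
    have hupp : 0 < u ^ p := by positivity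
    have e : (z * (((u ^ p : ℝ) : ℂ) + z)⁻¹).im
        = Real.sin φ * u ^ p / ((u ^ p + Real.cos φ) ^ 2 + Real.sin φ ^ 2) := by
      rw [Complex.mul_im, Complex.inv_re, Complex.inv_im, Complex.normSq_apply]
      simp only [Complex.add_re, Complex.add_im, Complex.ofReal_re, Complex.ofReal_im, hzre, hzim]
      have : (u ^ p + Real.cos φ) ^ 2 + Real.sin φ ^ 2 ≠ 0 := by positivity
      have h' : (u ^ p + Real.cos φ) * (u ^ p + Real.cos φ) + (0 + Real.sin φ) * (0 + Real.sin φ)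
        = (u ^ p + Real.cos φ) ^ 2 + Real.sin φ ^ 2 := by ring
      rw [h']
      field_simp
      ring
    rw [e, one_mul, sub_eq_add_neg]
    congr 1
    have h3 : 1 + ((u ^ p + Real.cos φ) / Real.sin φ) ^ 2
        = ((u ^ p + Real.cos φ) ^ 2 + Real.sin φ ^ 2) / Real.sin φ ^ 2 := by
      field_simp; ring
    have : (u ^ p + Real.cos φ) ^ 2 + Real.sin φ ^ 2 ≠ 0 := by positivity
    rw [h3, ← hup]
    rw [← hup] at this
    field_simp
  · have hk := aux_kpos hc
    refine squeeze_zero' (g := fun u : ℝ => Real.sin φ * (min (Real.cos φ) 1 / 2)⁻¹ * u⁻¹) ?_ ?_ ?_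
    · filter_upwards [eventually_gt_atTop 0] with u hu
      exact mul_nonneg hu.le (aux_T_nonneg _)
    · filter_upwards [eventually_gt_atTop 0] with u hu
      have a1 := aux_T_le hs (show 0 < u ^ p + Real.cos φ by positivity)
      have a2 := aux_inv_le hp hc hu.le
      have a3 : u * (1 + u ^ 2)⁻¹ ≤ u⁻¹ := by
        rw [← div_eq_mul_inv, ← one_div, div_le_div_iff₀ (by positivity) hu]
        nlinarith
      calc _ ≤ u * (Real.sin φ * ((min (Real.cos φ) 1 / 2)⁻¹ * (1 + u ^ 2)⁻¹)) := by
            refine mul_le_mul_of_nonneg_left (a1.trans ?_) hu.le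
            exact mul_le_mul_of_nonneg_left a2 hs.le
        _ = Real.sin φ * (min (Real.cos φ) 1 / 2)⁻¹ * (u * (1 + u ^ 2)⁻¹) := by ring
        _ ≤ _ := by gcongr
    · have := tendsto_inv_atTop_zero (𝕜 := ℝ)
      simpa using this.const_mul (Real.sin φ * (min (Real.cos φ) 1 / 2)⁻¹)

lemma aux_diff_bound {a s c ε u : ℝ} (ha0 : 0 < a) (ha1 : a < 1) (hs : 0 < s) (hs1 : s ≤ 1)
    (hc : 0 < c) (hε : 0 ≤ ε) (hε1 : ε ≤ 1) (hu : 0 < u) :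
    |(π / 2 - Real.arctan (((u ^ 2 - ε) / (1 + ε) * u ^ a + c) / s))
      - (π / 2 - Real.arctan ((u ^ (a + 2) + c) / s))| ≤ ε * (50 / s) * (1 + u ^ 2)⁻¹ := by
  have hw : 0 < u ^ a := by positivity
  have hp : u ^ (a + 2) = u ^ a * u ^ 2 := by rw [Real.rpow_add hu, Real.rpow_two]
  rw [hp]
  set w := u ^ a with hwdef
  set A := ((u ^ 2 - ε) / (1 + ε) * w + c) / s with hA
  set B := (w * u ^ 2 + c) / s with hB
  have hBA : B - A = ε / (1 + ε) * (w * (1 + u ^ 2)) / s := by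
    rw [hA, hB]; field_simp; ring
  have hAB : A ≤ B := by
    have : 0 ≤ B - A := by rw [hBA]; positivity
    linarith
  have hBA' : B - A ≤ ε * (w * (1 + u ^ 2)) / s := by
    rw [hBA]
    have : ε / (1 + ε) ≤ ε := div_le_self hε (by linarith)
    gcongr
  have hmono := Real.arctan_mono hAB
  rw [show (π / 2 - Real.arctan A) - (π / 2 - Real.arctan B)
    = Real.arctan B - Real.arctan A by ring, abs_of_nonneg (by linarith)]
  rcases le_total u 2 with h | h
  · have h1 := aux_arctan_sub (C := 1) hAB (fun x _ => by
      rw [div_le_one (by positivity)]; nlinarith [sq_nonneg x])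
    have hw2 : w ≤ 2 := by
      calc w ≤ 2 ^ a := Real.rpow_le_rpow hu.le h ha0.le
        _ ≤ 2 ^ (1:ℝ) := Real.rpow_le_rpow_of_exponent_le (by norm_num) ha1.le
        _ = 2 := Real.rpow_one 2
    have hu2 : 1 + u ^ 2 ≤ 5 := by nlinarith
    have : w * (1 + u ^ 2) ≤ 50 * (1 + u ^ 2)⁻¹ := by
      rw [← div_eq_mul_inv, le_div_iff₀ (by positivity)]
      have : w * (1 + u ^ 2) ≤ 2 * 5 := by gcongr
      nlinarith [sq_nonneg u]
    calc _ ≤ B - A := by linarith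
      _ ≤ ε * (w * (1 + u ^ 2)) / s := hBA'
      _ ≤ ε * (50 * (1 + u ^ 2)⁻¹) / s := by gcongr
      _ = _ := by ring
  · have hw1 : 1 ≤ w := Real.one_le_rpow (by linarith) ha0.le
    set X := w * (1 + u ^ 2) with hX
    have hX1 : 1 + u ^ 2 ≤ X := by rw [hX]; nlinarith [sq_nonneg u]
    have hXp : 0 < X := by positivity
    have hAX : X / (4 * s) ≤ A := by
      have : (1 + u ^ 2) / 4 ≤ (u ^ 2 - ε) / (1 + ε) := by
        rw [div_le_div_iff₀ (by norm_num) (by linarith)]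
        nlinarith
      have h2 : X / 4 ≤ (u ^ 2 - ε) / (1 + ε) * w + c := by
        have := mul_le_mul_of_nonneg_right this hw.le
        rw [hX]; linarith
      rw [hA, ← div_div]
      gcongr
    have h1 := aux_arctan_sub (C := 16 * s ^ 2 / X ^ 2) hAB (fun x hx => by
      have hx' := hAX.trans hx
      have : (X / (4 * s)) ^ 2 ≤ x ^ 2 := by gcongr
      calc 1 / (1 + x ^ 2) ≤ 1 / (X / (4 * s)) ^ 2 :=
            one_div_le_one_div_of_le (by positivity) (by linarith)
        _ = _ := by field_simp; norm_num)
    calc _ ≤ 16 * s ^ 2 / X ^ 2 * (B - A) := h1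
      _ ≤ 16 * s ^ 2 / X ^ 2 * (ε * X / s) := by gcongr
      _ = ε * (16 * s) * X⁻¹ := by field_simp
      _ ≤ ε * (50 / s) * (1 + u ^ 2)⁻¹ := by
        have : 16 * s ≤ 50 / s := by
          rw [le_div_iff₀ hs]; nlinarith
        gcongr

/-- `|b_α(β,ν) − b_α| ≤ C·(β/ν)²` for all large `ν`; in particular
`b_α(β,ν) → b_α` as `ν → ∞`. -/
theorem bAlphaNu_approx_bAlpha
    (α β : ℝ) (hα : α ∈ Set.Ioo (0:ℝ) 1) :
    (∃ C : ℝ, 0 < C ∧ ∃ ν₀ : ℝ, 0 < ν₀ ∧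
      ∀ ν : ℝ, ν₀ ≤ ν → |bAlphaNu α β ν - bAlpha α| ≤ C * (β / ν) ^ 2) ∧
    Tendsto (fun ν : ℝ => bAlphaNu α β ν) atTop (nhds (bAlpha α)) := by
  obtain ⟨hα0, hα1⟩ := hα
  have hmain : ∃ C : ℝ, 0 < C ∧ ∃ ν₀ : ℝ, 0 < ν₀ ∧
      ∀ ν : ℝ, ν₀ ≤ ν → |bAlphaNu α β ν - bAlpha α| ≤ C * (β / ν) ^ 2 := by
    have hπ := Real.pi_pos
    set φ := (1 - α) * π / 2 with hφ
    have h0 : 0 < φ := by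
      have : 0 < 1 - α := by linarith
      positivity
    have h1 : φ < π / 2 := by rw [hφ]; nlinarith
    have hc : 0 < Real.cos φ := Real.cos_pos_of_mem_Ioo ⟨by linarith, h1⟩
    have hs : 0 < Real.sin φ := Real.sin_pos_of_pos_of_lt_pi h0 (by linarith)
    have hs1 := Real.sin_le_one φ
    have hp : 2 ≤ (1 - α) + 2 := by linarith
    have hT := aux_T_int hp hc hs
    have hTI := aux_T_integral hp h0 h1
    have hb : bAlpha α = 1 / π * ∫ u in Ioi (0:ℝ),
        (π / 2 - Real.arctan ((u ^ ((1 - α) + 2) + Real.cos φ) / Real.sin φ)) := by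
      rw [hTI, bAlpha, show (1 - α) + 2 = 3 - α by ring,
        show π / (3 - α) * ((1 - α) / 2) = φ / (3 - α) by rw [hφ]; ring]
      field_simp
    refine ⟨1 / π * (50 / Real.sin φ * (π / 2)), by positivity, |β| + 1, by positivity, ?_⟩
    intro ν hν
    have hν0 : 0 < ν := by linarith [abs_nonneg β]
    have hε1 : (β / ν) ^ 2 ≤ 1 := by
      rw [sq_le_one_iff_abs_le_one, abs_div, abs_of_pos hν0, div_le_one hν0]
      linarith
    have hε := sq_nonneg (β / ν)
    have hth : ∀ u, thetaNu α β ν u = π / 2 - Real.arctan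
        (((u ^ 2 - (β / ν) ^ 2) / (1 + (β / ν) ^ 2) * u ^ (1 - α) + Real.cos φ) / Real.sin φ) := by
      intro u
      rw [thetaNu, aux_arg hs]
    rw [bAlphaNu, hb]
    simp_rw [hth]
    set ε := (β / ν) ^ 2 with hεdef
    have hbd : ∀ᵐ u ∂(volume.restrict (Ioi (0:ℝ))),
        ‖(π / 2 - Real.arctan (((u ^ 2 - ε) / (1 + ε) * u ^ (1 - α) + Real.cos φ) / Real.sin φ))
      - (π / 2 - Real.arctan ((u ^ ((1 - α) + 2) + Real.cos φ) / Real.sin φ))‖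
        ≤ ε * (50 / Real.sin φ) * (1 + u ^ 2)⁻¹ := by
      refine (ae_restrict_iff' measurableSet_Ioi).2 (ae_of_all _ fun u hu => ?_)
      exact aux_diff_bound (by linarith) (by linarith) hs hs1 hc hε hε1 hu
    have hgi := aux_intg.const_mul (ε * (50 / Real.sin φ))
    have hcont : Continuous (fun u : ℝ => u ^ (1 - α)) := Real.continuous_rpow_const (by linarith)
    have hdi := Integrable.mono' hgi (by
      apply Continuous.aestronglyMeasurable
      exact (continuous_const.sub (Real.continuous_arctan.comp
        ((((((continuous_pow 2).sub continuous_const).div_const _).mul hcont).add_const _).div_const _))).sub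
        (continuous_const.sub
      (Real.continuous_arctan.comp (((aux_cont hp).add_const _).div_const _)))) hbd
    have hTe := (hdi.add hT).congr (ae_of_all _ fun u => by
      show _ = π / 2 - Real.arctan (((u ^ 2 - ε) / (1 + ε) * u ^ (1 - α) + Real.cos φ) / Real.sin φ)
      simp only [Pi.add_apply]
      ring)
    have hle := norm_integral_le_of_norm_le hgi hbd
    rw [integral_sub hTe hT, integral_const_mul, integral_Ioi_inv_one_add_sq, Real.arctan_zero,
      sub_zero, Real.norm_eq_abs] at hle
    rw [← mul_sub, abs_mul, abs_of_pos (show 0 < 1 / π by positivity)]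
    calc _ ≤ 1 / π * (ε * (50 / Real.sin φ) * (π / 2)) := by gcongr
      _ = _ := by ring
  refine ⟨hmain, ?_⟩
  obtain ⟨C, hC, ν₀, hν₀, h⟩ := hmain
  rw [tendsto_iff_norm_sub_tendsto_zero]
  refine squeeze_zero' (g := fun ν => C * (β / ν) ^ 2) (Eventually.of_forall fun _ => norm_nonneg _) ?_ ?_
  · filter_upwards [eventually_ge_atTop ν₀] with ν hν
    exact h ν hν
  · have : Tendsto (fun ν : ℝ => β / ν) atTop (nhds 0) := tendsto_const_nhds.div_atTop tendsto_id
    simpa using (this.pow 2).const_mul C
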